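/- Let L1 and L2 be propositional bimodal logics with operators □_1, □_E and □_2, □_E respectively, each containing the S5 axioms for the shared □_E and each admitting E-homogeneous models for global consequence. For formulas φ, ψ of the combined language put Φ = sub φ ∪ sub ψ. Then the following are equivalent: (i) φ ⊬*_{L1 ⊗_E L2} ψ; (ii) there is a model based on a frame for L1 ⊗_E L2 with φ true at every world and ψ false at some world; (iii) there is a set Q of Φ-quasistates such that (C1) φ^1 ∧ Q̂^1 ⊬*_{L1} ψ^1, (C2) φ^1 ∧ Q̂^1 ⊬*_{L1} ¬(q̂^1) for each q ∈ Q, and (C3) Q̂^2 ⊬*_{L2} ¬(q̂^2) for each q ∈ Q. -/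

import Mathlib

namespace PropML

/-- propositional modal formulas over modal signature `M` -/
inductive PF (M : Type) : Type
  | atom : ℕ → PF M
  | neg : PF M → PF M
  | and : PF M → PF M → PF M
  | box : M → PF M → PF M
  deriving DecidableEq

namespace PF

variable {M M' : Type}

def imp (φ ψ : PF M) : PF M := .neg (.and φ (.neg ψ))

def or (φ ψ : PF M) : PF M := .neg (.and (.neg φ) (.neg ψ))

def dia (m : M) (φ : PF M) : PF M := .neg (.box m (.neg φ))

/-- `⊥` -/
def bot : PF M := .and (.atom 0) (.neg (.atom 0))

/-- renaming of modal operators -/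
def mapOp (f : M → M') : PF M → PF M'
  | atom n => atom n
  | neg φ => neg (mapOp f φ)
  | and φ ψ => and (mapOp f φ) (mapOp f ψ)
  | box m φ => box (f m) (mapOp f φ)

/-- uniform substitution -/
def substP (σ : ℕ → PF M) : PF M → PF M
  | atom n => σ n
  | neg φ => neg (substP σ φ)
  | and φ ψ => and (substP σ φ) (substP σ ψ)
  | box m φ => box m (substP σ φ)

end PF

/-- evaluation treating atoms and boxed formulas as atomic; used to define
the classical tautologies of the modal language -/
def tautEval {M : Type} (v : PF M → Prop) : PF M → Prop
  | .atom n => v (.atom n)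
  | .neg φ => ¬ tautEval v φ
  | .and φ ψ => tautEval v φ ∧ tautEval v ψ
  | .box m φ => v (.box m φ)

/-- classical tautologies of the propositional modal language -/
def IsTaut {M : Type} (φ : PF M) : Prop := ∀ v, tautEval v φ

/-- a (normal) propositional modal `M`-logic -/
structure IsPLogic {M : Type} (L : Set (PF M)) : Prop where
  taut : ∀ φ, IsTaut φ → φ ∈ L
  kax : ∀ (m : M) (n k : ℕ),
    PF.imp (.box m (PF.imp (.atom n) (.atom k)))
      (PF.imp (.box m (.atom n)) (.box m (.atom k))) ∈ L
  mp : ∀ φ ψ, PF.imp φ ψ ∈ L → φ ∈ L → ψ ∈ L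
  nec : ∀ m φ, φ ∈ L → PF.box m φ ∈ L
  subst : ∀ (σ : ℕ → PF M) φ, φ ∈ L → PF.substP σ φ ∈ L

/-- A Kripke `M`-frame. -/
structure KFrame (M : Type) where
  W : Type
  ne : Nonempty W
  R : M → W → W → Prop

/-- truth of a propositional formula in a Kripke model `(F, V)` -/
def PVal {M : Type} {F : KFrame M} (V : ℕ → F.W → Prop) : PF M → F.W → Prop
  | .atom n, w => V n w
  | .neg φ, w => ¬ PVal V φ w
  | .and φ ψ, w => PVal V φ w ∧ PVal V ψ w
  | .box m φ, w => ∀ v, F.R m w v → PVal V φ v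

/-- validity of a propositional formula on a frame -/
def PValid {M : Type} (F : KFrame M) (φ : PF M) : Prop :=
  ∀ (V : ℕ → F.W → Prop) (w : F.W), PVal (F := F) V φ w

/-- `F` is a frame for the logic `L` -/
def FrameFor {M : Type} (F : KFrame M) (L : Set (PF M)) : Prop :=
  ∀ φ ∈ L, PValid F φ

/-- `L` is Kripke complete -/
def KComplete {M : Type} (L : Set (PF M)) : Prop :=
  ∀ φ, (∀ F : KFrame M, FrameFor F L → PValid F φ) → φ ∈ L

/-- global consequence `φ ⊢*_L ψ`: `ψ` is in the smallest set including
`L ∪ {φ}` closed under Modus Ponens and Necessitation -/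
inductive PGlobal {M : Type} (L : Set (PF M)) (φ : PF M) : PF M → Prop
  | ax {ψ} : ψ ∈ L → PGlobal L φ ψ
  | prem : PGlobal L φ φ
  | mp {ψ χ} : PGlobal L φ (PF.imp ψ χ) → PGlobal L φ ψ → PGlobal L φ χ
  | nec (m : M) {ψ} : PGlobal L φ ψ → PGlobal L φ (PF.box m ψ)

/-- `L` is globally Kripke complete -/
def GloballyKComplete {M : Type} (L : Set (PF M)) : Prop :=
  ∀ φ ψ, PGlobal L φ ψ ↔
    ∀ F : KFrame M, FrameFor F L → ∀ V : ℕ → F.W → Prop,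
      (∀ w, PVal (F := F) V φ w) → ∀ w, PVal (F := F) V ψ w

/-- the S5 axioms for the operator `e` -/
def ContainsS5 {M : Type} (L : Set (PF M)) (e : M) : Prop :=
  PF.imp (.box e (.atom 0)) (.atom 0) ∈ L ∧
  PF.imp (.box e (.atom 0)) (.box e (.box e (.atom 0))) ∈ L ∧
  PF.imp (PF.dia e (.atom 0)) (.box e (PF.dia e (.atom 0))) ∈ L

/-- an `(E, κ)`-homogeneous model: in each `E`-equivalence class, each formula
is satisfied either nowhere or at exactly `κ` worlds -/
def EHomog {M : Type} {F : KFrame M} (e : M) (V : ℕ → F.W → Prop)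
    (κ : Cardinal) : Prop :=
  ∀ (w : F.W) (φ : PF M),
    Cardinal.mk {v : F.W // F.R e w v ∧ PVal (F := F) V φ v} = 0 ∨
    Cardinal.mk {v : F.W // F.R e w v ∧ PVal (F := F) V φ v} = κ

/-- `L` admits `E`-homogeneous models -/
def AdmitsEHomog {M : Type} (e : M) (L : Set (PF M)) : Prop :=
  ∃ κ : Cardinal, Cardinal.aleph0 ≤ κ ∧ ∀ κ', κ ≤ κ' → ∀ φ ∉ L,
    ∃ F : KFrame M, FrameFor F L ∧ ∃ V : ℕ → F.W → Prop,
      EHomog e V κ' ∧ ∃ w, ¬ PVal (F := F) V φ w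

/-- `L` admits `E`-homogeneous models for global consequence -/
def AdmitsEHomogGlobal {M : Type} (e : M) (L : Set (PF M)) : Prop :=
  ∃ κ : Cardinal, Cardinal.aleph0 ≤ κ ∧ ∀ κ', κ ≤ κ' → ∀ φ ψ, ¬ PGlobal L φ ψ →
    ∃ F : KFrame M, FrameFor F L ∧ ∃ V : ℕ → F.W → Prop,
      EHomog e V κ' ∧ (∀ w, PVal (F := F) V φ w) ∧ ∃ w, ¬ PVal (F := F) V ψ w

/-- the fusion `L1 ⊗_E L2` of two logics sharing the S5 operator `□_E`
(designated by `none` in each component signature): the smallest propositional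
modal logic in the combined language (with the single shared `□_E`) including
`L1 ∪ L2` -/
def fusionE {M1 M2 : Type} (L1 : Set (PF (Option M1))) (L2 : Set (PF (Option M2))) :
    Set (PF (Option (M1 ⊕ M2))) :=
  ⋂₀ {L | IsPLogic L ∧
    PF.mapOp (Option.map Sum.inl) '' L1 ⊆ L ∧
    PF.mapOp (Option.map Sum.inr) '' L2 ⊆ L}

/-- the propositional modal logic `S5` (of the single operator `□_E`) -/
def S5L : Set (PF Unit) := ⋂₀ {L | IsPLogic L ∧ ContainsS5 L ()}

/-- the left commutativity axiom `□□_E p → □_E □ p` -/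
def lcom {M : Type} (m : M) : PF (Option M) :=
  PF.imp (.box (some m) (.box none (.atom 0))) (.box none (.box (some m) (.atom 0)))

/-- the right commutativity axiom `□_E □ p → □ □_E p` -/
def rcom {M : Type} (m : M) : PF (Option M) :=
  PF.imp (.box none (.box (some m) (.atom 0))) (.box (some m) (.box none (.atom 0)))

/-- the semicommutator `[L, S5]^xd = L ⊗ S5 + {lcom_□ : □ ∈ M}`
(`□_E` is `none`) -/
def LS5xd {M : Type} (L : Set (PF M)) : Set (PF (Option M)) :=
  ⋂₀ {L' | IsPLogic L' ∧
    PF.mapOp Option.some '' L ⊆ L' ∧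
    PF.mapOp (fun _ => (none : Option M)) '' S5L ⊆ L' ∧
    ∀ m : M, lcom m ∈ L'}

/-- the commutator `[L, S5]^cd = [L, S5]^xd + {rcom_□ : □ ∈ M}` -/
def LS5cd {M : Type} (L : Set (PF M)) : Set (PF (Option M)) :=
  ⋂₀ {L' | IsPLogic L' ∧ LS5xd L ⊆ L' ∧ ∀ m : M, rcom m ∈ L'}

/-- the two domain semantics: expanding (`xd`) and constant (`cd`) domains -/
inductive DSem : Type
  | xd | cd
  deriving DecidableEq

/-- `[L, S5]^d` -/
def LS5 {M : Type} (d : DSem) (L : Set (PF M)) : Set (PF (Option M)) :=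
  match d with
  | .xd => LS5xd L
  | .cd => LS5cd L

/-- the fixed Gödel numbering of propositional formulas (relative to a
numbering `eM` of the modal operators) -/
def PF.encode {M : Type} (eM : M → ℕ) : PF M → ℕ
  | .atom n => Nat.pair 0 n
  | .neg φ => Nat.pair 1 (PF.encode eM φ)
  | .and φ ψ => Nat.pair 2 (Nat.pair (PF.encode eM φ) (PF.encode eM ψ))
  | .box m φ => Nat.pair 3 (Nat.pair (eM m) (PF.encode eM φ))

/-- decidability of a propositional logic w.r.t. the fixed Gödel numbering -/
def DecidableP {M : Type} (eM : M → ℕ) (L : Set (PF M)) : Prop :=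
  ComputablePred (fun n : ℕ => ∃ φ ∈ L, PF.encode eM φ = n)

/-- decidability of the global consequence relation -/
def GloballyDecidableP {M : Type} (eM : M → ℕ) (L : Set (PF M)) : Prop :=
  ComputablePred (fun p : ℕ × ℕ =>
    ∃ φ ψ, PGlobal L φ ψ ∧ PF.encode eM φ = p.1 ∧ PF.encode eM ψ = p.2)

end PropML

namespace PropML

/-- the component signature: `some ()` is the proper operator, `none` is `□_E` -/
abbrev OU : Type := Option Unit

/-- the combined signature: `some (Sum.inl ())` is `□₁`, `some (Sum.inr ())`
is `□₂`, and `none` is the shared `□_E` -/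
abbrev OC : Type := Option (Unit ⊕ Unit)

namespace PF

variable {M : Type}

/-- the set of subformulas -/
def sub [DecidableEq M] : PF M → Finset (PF M)
  | atom n => {atom n}
  | neg φ => insert (neg φ) φ.sub
  | and φ ψ => insert (and φ ψ) (φ.sub ∪ ψ.sub)
  | box m φ => insert (box m φ) φ.sub

/-- indices of the proposition letters occurring in a formula -/
def atoms : PF M → Finset ℕ
  | atom n => {n}
  | neg φ => φ.atoms
  | and φ ψ => φ.atoms ∪ ψ.atoms
  | box _ φ => φ.atoms

end PF

/-- finite conjunction (`⊤` for the empty list) -/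
def bigAndP {M : Type} : List (PF M) → PF M
  | [] => PF.imp (.atom 0) (.atom 0)
  | φ :: l => List.foldl PF.and φ l

/-- finite disjunction -/
def bigOrP {M : Type} (l : List (PF M)) : PF M := PF.neg (bigAndP (l.map PF.neg))

/-- a `Φ`-type: a maximal Boolean-consistent subset of `{ψ, ¬ψ ∣ ψ ∈ Φ}` -/
def IsTypeP {M : Type} [DecidableEq M] (Φ t : Finset (PF M)) : Prop :=
  (∀ χ ∈ t, χ ∈ Φ ∨ ∃ ψ ∈ Φ, χ = PF.neg ψ) ∧
  (∀ ψ ∈ Φ, (PF.neg ψ ∈ t ↔ ψ ∉ t)) ∧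
  (∀ ψ₁ ψ₂, PF.and ψ₁ ψ₂ ∈ Φ → (PF.and ψ₁ ψ₂ ∈ t ↔ ψ₁ ∈ t ∧ ψ₂ ∈ t))

/-- a `Φ`-quasistate: a non-empty set of `Φ`-types saturated for `◇_E` -/
def IsQuasistateP {M : Type} [DecidableEq M] (eOp : M) (Φ : Finset (PF M))
    (q : Finset (Finset (PF M))) : Prop :=
  q.Nonempty ∧ (∀ t ∈ q, IsTypeP Φ t) ∧
  ∀ ψ, PF.box eOp (PF.neg ψ) ∈ Φ → ∀ t ∈ q,
    (PF.neg (PF.box eOp (PF.neg ψ)) ∈ t ↔ ∃ t' ∈ q, ψ ∈ t')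

/-- the conjunction of the formulas in the type `t` -/
noncomputable def typeConjP {M : Type} (t : Finset (PF M)) : PF M := bigAndP t.toList

/-- the realisability formula `q̂ = □_E ⋁_{t∈q} t ∧ ⋀_{t∈q} ◇_E t` -/
noncomputable def qhatP {M : Type} (eOp : M) (q : Finset (Finset (PF M))) : PF M :=
  PF.and (PF.box eOp (bigOrP (q.toList.map typeConjP)))
    (bigAndP (q.toList.map (fun t => PF.dia eOp (typeConjP t))))

/-- `Q̂ = ⋁_{q ∈ Q} q̂` -/
noncomputable def QhatP {M : Type} (eOp : M) (Q : Finset (Finset (Finset (PF M)))) :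
    PF M :=
  bigOrP (Q.toList.map (qhatP eOp))

/-- the surrogate translation `·¹` into the language of the first component:
maximal subformulas `□₂ψ` are replaced by the fresh surrogate letter given
by `s` -/
def sur1P (s : PF OC → ℕ) : PF OC → PF OU
  | .atom n => .atom n
  | .neg φ => .neg (sur1P s φ)
  | .and φ ψ => .and (sur1P s φ) (sur1P s ψ)
  | .box none φ => .box none (sur1P s φ)
  | .box (some (Sum.inl _)) φ => .box (some ()) (sur1P s φ)
  | .box (some (Sum.inr _)) φ => .atom (s (.box (some (Sum.inr ())) φ))

/-- the surrogate translation `·²` into the language of the second component -/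
def sur2P (s : PF OC → ℕ) : PF OC → PF OU
  | .atom n => .atom n
  | .neg φ => .neg (sur2P s φ)
  | .and φ ψ => .and (sur2P s φ) (sur2P s ψ)
  | .box none φ => .box none (sur2P s φ)
  | .box (some (Sum.inr _)) φ => .box (some ()) (sur2P s φ)
  | .box (some (Sum.inl _)) φ => .atom (s (.box (some (Sum.inl ())) φ))

/-- `Θ¹(φ)`: the proposition letters of `φ` together with all subformulas of
`□₂`-subformulas -/
def Theta1P (φ : PF OC) : Finset (PF OC) :=
  φ.sub.filter (fun χ => (match χ with | .atom _ => true | _ => false) = true) ∪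
  (φ.sub.filter
    (fun χ => (match χ with | .box (some (Sum.inr _)) _ => true | _ => false) = true)).biUnion
    PF.sub

/-- `Θ²(φ)` -/
def Theta2P (φ : PF OC) : Finset (PF OC) :=
  φ.sub.filter (fun χ => (match χ with | .atom _ => true | _ => false) = true) ∪
  (φ.sub.filter
    (fun χ => (match χ with | .box (some (Sum.inl _)) _ => true | _ => false) = true)).biUnion
    PF.sub

/-- the modal `1`-depth: maximal nesting of `□₁`, ignoring `□₂` and `□_E` -/
def md1P : PF OC → ℕ
  | .atom _ => 0
  | .neg φ => md1P φ
  | .and φ ψ => max (md1P φ) (md1P ψ)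
  | .box none φ => md1P φ
  | .box (some (Sum.inl _)) φ => md1P φ + 1
  | .box (some (Sum.inr _)) φ => md1P φ

/-- the modal `2`-depth -/
def md2P : PF OC → ℕ
  | .atom _ => 0
  | .neg φ => md2P φ
  | .and φ ψ => max (md2P φ) (md2P ψ)
  | .box none φ => md2P φ
  | .box (some (Sum.inl _)) φ => md2P φ
  | .box (some (Sum.inr _)) φ => md2P φ + 1

/-- the pair `(adp¹(φ), adp²(φ))` of alternation depths: `adp¹(φ)` is the
least number of alternating applications of the restoring operations
`·⁻¹, ·⁻², …` needed to recover `φ` from `φ¹`, i.e. the maximal number of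
alternations between `□₁` and `□₂` in `φ` starting from `□₁`; symmetrically
for `adp²`. -/
def adpPairP : PF OC → ℕ × ℕ
  | .atom _ => (0, 0)
  | .neg φ => adpPairP φ
  | .and φ ψ => (max (adpPairP φ).1 (adpPairP ψ).1, max (adpPairP φ).2 (adpPairP ψ).2)
  | .box none φ => adpPairP φ
  | .box (some (Sum.inl _)) φ => ((adpPairP φ).1, (adpPairP φ).1 + 1)
  | .box (some (Sum.inr _)) φ => ((adpPairP φ).2 + 1, (adpPairP φ).2)

/-- `adp¹(φ)` -/
def adp1P (φ : PF OC) : ℕ := (adpPairP φ).1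

/-- `adp²(φ)` -/
def adp2P (φ : PF OC) : ℕ := (adpPairP φ).2

/-- `adp(φ) = min (adp¹(φ), adp²(φ))` -/
def adpP (φ : PF OC) : ℕ := min (adp1P φ) (adp2P φ)

/-- `□_{i,E}^m χ`, in the component language: `□_{i,E}^{m+1} χ =
□_E □_i □_E □_{i,E}^m χ` -/
def boxIE : ℕ → PF OU → PF OU
  | 0, χ => χ
  | n + 1, χ => .box none (.box (some ()) (.box none (boxIE n χ)))

/-- `□_{i,E}^{≤m} χ = χ ∧ □_{i,E}^1 χ ∧ … ∧ □_{i,E}^m χ` -/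
def boxIELe : ℕ → PF OU → PF OU
  | 0, χ => χ
  | n + 1, χ => .and (boxIELe n χ) (boxIE (n + 1) χ)

open Classical in
/-- `Q₁(φ)`: all `Θ¹(φ)`-quasistates `q` with `⊬_L ¬q̂` (for `L = L1 ⊗_E L2`) -/
noncomputable def Qset1P (L : Set (PF OC)) (φ : PF OC) :
    Finset (Finset (Finset (PF OC))) :=
  ((Theta1P φ ∪ (Theta1P φ).image PF.neg).powerset.powerset).filter
    (fun q => IsQuasistateP none (Theta1P φ) q ∧ PF.neg (qhatP none q) ∉ L)

open Classical in
/-- `Q₂(φ)` -/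
noncomputable def Qset2P (L : Set (PF OC)) (φ : PF OC) :
    Finset (Finset (Finset (PF OC))) :=
  ((Theta2P φ ∪ (Theta2P φ).image PF.neg).powerset.powerset).filter
    (fun q => IsQuasistateP none (Theta2P φ) q ∧ PF.neg (qhatP none q) ∉ L)

end PropML

namespace PropML

/-!
Every `E`-class of a model realises a quasistate. The quasistates realised in a model are exactly
the members of `Q` iff `Q̂` is true everywhere and each `q̂` with `q ∈ Q` is true somewhere.

A refutation of `φ ⊢* ψ` in the canonical model of `{χ | φ ⊢* χ}` gives `Q`: read each surrogate
letter as the formula it stands for. Conversely, (C1)–(C3) and the disjoint union of homogeneous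
models provide, for a common `κ`, one model for each component logic, both realising exactly the
quasistates in `Q`. In an `(E, κ)`-homogeneous model a class realising `q` contains exactly `κ`
worlds of each type in `q`, so after taking sufficiently many copies of both models there is a
bijection between them that preserves `E` and the types. Interpreting `□₂` along this bijection
turns the first model into a model for the fusion.
-/

section Semantics

variable {M M' : Type}

@[simp]
theorem pval_imp {F : KFrame M} (V : ℕ → F.W → Prop) (φ ψ : PF M) (w : F.W) :
    PVal V (φ.imp ψ) w ↔ (PVal V φ w → PVal V ψ w) := by
  simp [PF.imp, PVal]

@[simp]
theorem pval_dia {F : KFrame M} (V : ℕ → F.W → Prop) (m : M) (φ : PF M) (w : F.W) :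
    PVal V (φ.dia m) w ↔ ∃ v, F.R m w v ∧ PVal V φ v := by
  simp [PF.dia, PVal]

theorem pval_substP {F : KFrame M} (V : ℕ → F.W → Prop) (σ : ℕ → PF M) (χ : PF M) (w : F.W) :
    PVal V (χ.substP σ) w ↔ PVal (fun n => PVal V (σ n)) χ w := by
  induction χ generalizing w with
  | atom n => rfl
  | neg χ ih => simp [PF.substP, PVal, ih]
  | and χ θ ihχ ihθ => simp [PF.substP, PVal, ihχ, ihθ]
  | box m χ ih => simp [PF.substP, PVal, ih]

theorem tautEval_pval {F : KFrame M} (V : ℕ → F.W → Prop) (w : F.W) (χ : PF M) :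
    tautEval (fun θ => PVal V θ w) χ ↔ PVal V χ w := by
  induction χ with
  | atom n => rfl
  | neg χ ih => simp [tautEval, PVal, ih]
  | and χ θ ihχ ihθ => simp [tautEval, PVal, ihχ, ihθ]
  | box m χ => rfl

theorem isPLogic_setOf_pValid (F : KFrame M) : IsPLogic {χ | PValid F χ} where
  taut χ h V w := (tautEval_pval V w χ).1 (h _)
  kax m n k V w := by
    simp only [pval_imp, PVal]
    exact fun h h' v hv => h v hv (h' v hv)
  mp χ θ h h' V w := (pval_imp V χ θ w).1 (h V w) (h' V w)
  nec m χ h V w v _ := h V v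
  subst σ χ h V w := (pval_substP V σ χ w).2 (h _ w)

theorem PGlobal.sound {L : Set (PF M)} {φ ψ : PF M} (h : PGlobal L φ ψ) {F : KFrame M}
    {V : ℕ → F.W → Prop} (hL : ∀ χ ∈ L, ∀ w, PVal V χ w) (hφ : ∀ w, PVal V φ w) (w : F.W) :
    PVal V ψ w := by
  induction h generalizing w with
  | ax h => exact hL _ h w
  | prem => exact hφ w
  | mp _ _ ih ih' => exact (pval_imp V _ _ w).1 (ih w) (ih' w)
  | nec m _ ih => exact fun v _ => ih v

/-- The reduct of an `M'`-frame along `f : M → M'`: the operator `m` is interpreted by the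
relation of `f m`. -/
abbrev KFrame.reduct (f : M → M') (F : KFrame M') : KFrame M := ⟨F.W, F.ne, fun m => F.R (f m)⟩

theorem pval_mapOp (f : M → M') {F : KFrame M'} (V : ℕ → F.W → Prop) (χ : PF M) (w : F.W) :
    PVal V (χ.mapOp f) w ↔ PVal (F := F.reduct f) V χ w := by
  induction χ generalizing w with
  | atom n => rfl
  | neg χ ih => simp [PF.mapOp, PVal, ih]
  | and χ θ ihχ ihθ => simp [PF.mapOp, PVal, ihχ, ihθ]
  | box m χ ih => exact forall₂_congr fun v _ => ih v

theorem equivalence_of_refl_of_euclidean {α : Type*} {r : α → α → Prop} (hr : ∀ a, r a a)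
    (he : ∀ a b c, r a b → r a c → r b c) : Equivalence r where
  refl := hr
  symm h := he _ _ _ h (hr _)
  trans h h' := he _ _ _ (he _ _ _ h (hr _)) h'

theorem FrameFor.equivalence {L : Set (PF M)} {e : M} (hS : ContainsS5 L e) {F : KFrame M}
    (hF : FrameFor F L) : Equivalence (F.R e) := by
  obtain ⟨hT, -, h5⟩ := hS
  refine equivalence_of_refl_of_euclidean (fun w => ?_) fun w u v hu hv => ?_
  · exact (pval_imp _ _ _ w).1 (hF _ hT (fun _ => F.R e w) w) fun v hv => hv
  · have h := (pval_imp _ _ _ w).1 (hF _ h5 (fun _ x => x = v) w)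
      ((pval_dia _ _ _ w).2 ⟨v, hv, rfl⟩) u hu
    obtain ⟨x, hx, rfl⟩ := (pval_dia _ _ _ u).1 h
    exact hx

end Semantics

section BoundedMorphisms

variable {M : Type} {L : Set (PF M)}

/-- Bounded morphisms (p-morphisms) between Kripke frames. -/
structure IsBoundedMorphism (F G : KFrame M) (f : F.W → G.W) : Prop where
  forth : ∀ {m w v}, F.R m w v → G.R m (f w) (f v)
  back : ∀ {m w u}, G.R m (f w) u → ∃ v, F.R m w v ∧ f v = u

theorem IsBoundedMorphism.pval_comp {F G : KFrame M} {f : F.W → G.W}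
    (hf : IsBoundedMorphism F G f) (V : ℕ → G.W → Prop) (χ : PF M) (w : F.W) :
    PVal (F := F) (fun n v => V n (f v)) χ w ↔ PVal V χ (f w) := by
  induction χ generalizing w with
  | atom n => rfl
  | neg χ ih => simp [PVal, ih]
  | and χ θ ihχ ihθ => simp [PVal, ihχ, ihθ]
  | box m χ ih =>
    simp only [PVal, ih]
    constructor
    · intro h u hu
      obtain ⟨v, hv, rfl⟩ := hf.back hu
      exact h v hv
    · exact fun h v hv => h _ (hf.forth hv)

theorem frameFor_of_cover {G : KFrame M}
    (h : ∀ u : G.W, ∃ F, FrameFor F L ∧ ∃ f, IsBoundedMorphism F G f ∧ u ∈ Set.range f) :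
    FrameFor G L := by
  intro χ hχ V u
  obtain ⟨F, hF, f, hf, w, rfl⟩ := h u
  exact (hf.pval_comp V χ w).1 (hF χ hχ _ w)

theorem IsBoundedMorphism.mk_succ_eq {F G : KFrame M} {f : F.W → G.W}
    (hf : IsBoundedMorphism F G f) (hinj : Function.Injective f) (m : M) (w : F.W)
    (P : G.W → Prop) :
    Cardinal.mk {v // F.R m w v ∧ P (f v)} = Cardinal.mk {u // G.R m (f w) u ∧ P u} := by
  refine Cardinal.mk_congr (Equiv.ofBijective
    (Subtype.map f fun v hv => ⟨hf.forth hv.1, hv.2⟩) ⟨Subtype.map_injective _ hinj, ?_⟩)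
  rintro ⟨u, hu, hP⟩
  obtain ⟨v, hv, rfl⟩ := hf.back hu
  exact ⟨⟨v, hv, hP⟩, rfl⟩

/-- The accessibility relation of a disjoint union: related worlds lie in one summand and are
related there. -/
inductive SigmaRel {J : Type} (F : J → KFrame M) (m : M) :
    (Σ j, (F j).W) → (Σ j, (F j).W) → Prop
  | mk {j : J} {w v : (F j).W} : (F j).R m w v → SigmaRel F m ⟨j, w⟩ ⟨j, v⟩

/-- The disjoint union of a nonempty family of frames. -/
abbrev disjointUnion {J : Type} [hJ : Nonempty J] (F : J → KFrame M) : KFrame M where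
  W := Σ j, (F j).W
  ne := hJ.elim fun j => (F j).ne.map (Sigma.mk j)
  R := SigmaRel F

section DisjointUnion

variable {J : Type} [Nonempty J] (F : J → KFrame M)

theorem isBoundedMorphism_sigmaMk (j : J) :
    IsBoundedMorphism (F j) (disjointUnion F) (Sigma.mk (β := fun i => (F i).W) j) where
  forth := .mk
  back := fun (.mk h) => ⟨_, h, rfl⟩

variable {F}

theorem FrameFor.sigma (hF : ∀ j, FrameFor (F j) L) : FrameFor (disjointUnion F) L :=
  frameFor_of_cover fun ⟨j, w⟩ => ⟨F j, hF j, _, isBoundedMorphism_sigmaMk F j, w, rfl⟩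

/-- A valuation on a disjoint union, given summand by summand. -/
def sigmaVal (V : ∀ j, ℕ → (F j).W → Prop) (n : ℕ) (x : (disjointUnion F).W) : Prop :=
  V x.1 n x.2

theorem pval_disjointUnion (V : ∀ j, ℕ → (F j).W → Prop) (χ : PF M) (j : J) (w : (F j).W) :
    PVal (sigmaVal V) χ ⟨j, w⟩ ↔ PVal (V j) χ w :=
  ((isBoundedMorphism_sigmaMk F j).pval_comp (sigmaVal V) χ w).symm

theorem EHomog.sigma {V : ∀ j, ℕ → (F j).W → Prop} {e : M} {κ : Cardinal}
    (hV : ∀ j, EHomog e (V j) κ) : EHomog e (sigmaVal V) κ := by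
  rintro ⟨j, w⟩ χ
  rw [← (isBoundedMorphism_sigmaMk F j).mk_succ_eq sigma_mk_injective]
  simpa only [pval_disjointUnion] using hV j w χ

end DisjointUnion

/-- The models promised by `AdmitsEHomogGlobal`: `(e, κ)`-homogeneous, based on a frame for `L`,
and satisfying the global premise `α`. -/
structure IsHomogModel (L : Set (PF M)) (e : M) (κ : Cardinal) (α : PF M) {F : KFrame M}
    (V : ℕ → F.W → Prop) : Prop where
  frameFor : FrameFor F L
  homog : EHomog e V κ
  premise : ∀ w, PVal V α w

theorem exists_isHomogModel_of_forall {e : M} {κ : Cardinal} {α : PF M} {S : Set (PF M)}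
    (hS : S.Nonempty)
    (h : ∀ β ∈ S, ∃ (F : KFrame M) (V : ℕ → F.W → Prop),
      IsHomogModel L e κ α V ∧ ∃ w, ¬ PVal V β w) :
    ∃ (F : KFrame M) (V : ℕ → F.W → Prop),
      IsHomogModel L e κ α V ∧ ∀ β ∈ S, ∃ w, ¬ PVal V β w := by
  have := hS.to_subtype
  choose F V hV w hw using fun β : S => h β β.2
  refine ⟨disjointUnion F, sigmaVal V, ⟨.sigma fun β => (hV β).frameFor,
    .sigma fun β => (hV β).homog, fun ⟨β, v⟩ => ?_⟩, fun β hβ => ⟨⟨⟨β, hβ⟩, w _⟩, ?_⟩⟩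
  · exact (pval_disjointUnion V α β v).2 ((hV β).premise v)
  · exact fun h' => hw _ ((pval_disjointUnion V β _ _).1 h')

theorem AdmitsEHomogGlobal.exists_isHomogModel {e : M} (hL : AdmitsEHomogGlobal e L) :
    ∃ κ₀, ∀ κ, κ₀ ≤ κ → ∀ (α : PF M) (S : Set (PF M)), S.Nonempty →
      (∀ β ∈ S, ¬ PGlobal L α β) → ∃ (F : KFrame M) (V : ℕ → F.W → Prop),
        IsHomogModel L e κ α V ∧ ∀ β ∈ S, ∃ w, ¬ PVal V β w := by
  obtain ⟨κ₀, -, h⟩ := hL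
  refine ⟨κ₀, fun κ hκ α S hS hβ => exists_isHomogModel_of_forall hS fun β hβS => ?_⟩
  obtain ⟨F, hF, V, hom, hα, hw⟩ := h κ hκ α β (hβ β hβS)
  exact ⟨F, V, ⟨hF, hom, hα⟩, hw⟩

end BoundedMorphisms

section Translations

variable {M M' : Type}

/-- `tr` commutes with the Boolean connectives and sends `□_e` to `□_{e'}`; this is all that the
realisability formulas see of the surrogate translations. -/
structure IsTranslation (e : M) (e' : M') (tr : PF M → PF M') : Prop where
  neg : ∀ χ, tr χ.neg = (tr χ).neg
  and : ∀ χ θ, tr (χ.and θ) = (tr χ).and (tr θ)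
  box : ∀ χ, tr (.box e χ) = .box e' (tr χ)

theorem isTranslation_id (e : M) : IsTranslation e e id :=
  ⟨fun _ => rfl, fun _ _ => rfl, fun _ => rfl⟩

theorem isTranslation_sur1P (s : PF OC → ℕ) : IsTranslation none none (sur1P s) :=
  ⟨fun _ => by rw [sur1P], fun _ _ => by rw [sur1P], fun _ => by rw [sur1P]⟩

theorem isTranslation_sur2P (s : PF OC → ℕ) : IsTranslation none none (sur2P s) :=
  ⟨fun _ => by rw [sur2P], fun _ _ => by rw [sur2P], fun _ => by rw [sur2P]⟩

namespace IsTranslation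

variable {e : M} {e' : M'} {tr : PF M → PF M'} (ht : IsTranslation e e' tr) {F : KFrame M'}
  (V : ℕ → F.W → Prop) (w : F.W)
include ht

theorem pval_dia (χ : PF M) :
    PVal V (tr (χ.dia e)) w ↔ ∃ v, F.R e' w v ∧ PVal V (tr χ) v := by
  simp [PF.dia, ht.neg, ht.box, PVal]

theorem pval_foldl_and (l : List (PF M)) (χ : PF M) :
    PVal V (tr (l.foldl PF.and χ)) w ↔ PVal V (tr χ) w ∧ ∀ θ ∈ l, PVal V (tr θ) w := by
  induction l generalizing χ with
  | nil => simp
  | cons θ l ih => simp [ih, ht.and, PVal, and_assoc]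

theorem pval_bigAndP (l : List (PF M)) :
    PVal V (tr (bigAndP l)) w ↔ ∀ χ ∈ l, PVal V (tr χ) w := by
  cases l with
  | nil => simp [bigAndP, PF.imp, ht.neg, ht.and, PVal]
  | cons χ l => simp [bigAndP, ht.pval_foldl_and]

theorem pval_bigOrP (l : List (PF M)) :
    PVal V (tr (bigOrP l)) w ↔ ∃ χ ∈ l, PVal V (tr χ) w := by
  simp [bigOrP, ht.neg, PVal, ht.pval_bigAndP]

end IsTranslation

end Translations

/-- Closure under immediate, hence under all, subformulas. -/
structure SubformulaClosed {M : Type} (Φ : Finset (PF M)) : Prop where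
  neg : ∀ {χ}, PF.neg χ ∈ Φ → χ ∈ Φ
  and_left : ∀ {χ θ}, PF.and χ θ ∈ Φ → χ ∈ Φ
  and_right : ∀ {χ θ}, PF.and χ θ ∈ Φ → θ ∈ Φ
  box : ∀ {m χ}, PF.box m χ ∈ Φ → χ ∈ Φ

section SubformulaClosed

variable {M : Type} [DecidableEq M]

theorem PF.mem_sub_self (χ : PF M) : χ ∈ χ.sub := by
  cases χ <;> simp [PF.sub]

theorem subformulaClosed_sub (χ : PF M) : SubformulaClosed χ.sub := by
  induction χ with
  | atom n => constructor <;> simp [PF.sub]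
  | neg χ ih =>
    constructor <;> simp only [PF.sub, Finset.mem_insert] <;>
      grind [ih.1, ih.2, ih.3, ih.4, PF.mem_sub_self]
  | and χ θ ihχ ihθ =>
    constructor <;> simp only [PF.sub, Finset.mem_insert, Finset.mem_union] <;>
      grind [ihχ.1, ihχ.2, ihχ.3, ihχ.4, ihθ.1, ihθ.2, ihθ.3, ihθ.4, PF.mem_sub_self]
  | box m χ ih =>
    constructor <;> simp only [PF.sub, Finset.mem_insert] <;>
      grind [ih.1, ih.2, ih.3, ih.4, PF.mem_sub_self]

theorem SubformulaClosed.union {Φ Ψ : Finset (PF M)} (hΦ : SubformulaClosed Φ)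
    (hΨ : SubformulaClosed Ψ) : SubformulaClosed (Φ ∪ Ψ) := by
  constructor <;> simp only [Finset.mem_union]
  · exact Or.imp hΦ.neg hΨ.neg
  · exact Or.imp hΦ.and_left hΨ.and_left
  · exact Or.imp hΦ.and_right hΨ.and_right
  · exact Or.imp hΦ.box hΨ.box

end SubformulaClosed

section Quasistates

variable {M M' M'' : Type} [DecidableEq M] {e : M} {e' : M'} {tr : PF M → PF M'}
  {Φ : Finset (PF M)} {F : KFrame M'} {V : ℕ → F.W → Prop} {w : F.W}

open Classical in
/-- The `Φ`-type realised at `w` in the model `(F, V)`, where a formula `χ` is evaluated through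
its translation `tr χ`. -/
noncomputable def typeAt (tr : PF M → PF M') (Φ : Finset (PF M)) {F : KFrame M'}
    (V : ℕ → F.W → Prop) (w : F.W) : Finset (PF M) :=
  (Φ ∪ Φ.image PF.neg).filter fun χ => PVal V (tr χ) w

open Classical in
/-- The set of `Φ`-types realised in the `e'`-class of `w`. -/
noncomputable def quasistateAt (tr : PF M → PF M') (e' : M') (Φ : Finset (PF M)) {F : KFrame M'}
    (V : ℕ → F.W → Prop) (w : F.W) : Finset (Finset (PF M)) :=
  (Φ ∪ Φ.image PF.neg).powerset.filter fun t => ∃ v, F.R e' w v ∧ typeAt tr Φ V v = t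

theorem mem_typeAt {χ : PF M} :
    χ ∈ typeAt tr Φ V w ↔ χ ∈ Φ ∪ Φ.image PF.neg ∧ PVal V (tr χ) w := by
  simp only [typeAt, Finset.mem_filter]

theorem mem_typeAt_of_mem {χ : PF M} (hχ : χ ∈ Φ) : χ ∈ typeAt tr Φ V w ↔ PVal V (tr χ) w := by
  simp [mem_typeAt, hχ]

theorem neg_mem_typeAt_of_mem {χ : PF M} (hχ : χ ∈ Φ) :
    χ.neg ∈ typeAt tr Φ V w ↔ PVal V (tr χ.neg) w := by
  simp [mem_typeAt, Finset.mem_image_of_mem PF.neg hχ]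

theorem mem_quasistateAt {t : Finset (PF M)} :
    t ∈ quasistateAt tr e' Φ V w ↔ ∃ v, F.R e' w v ∧ typeAt tr Φ V v = t := by
  simp only [quasistateAt, Finset.mem_filter, Finset.mem_powerset, and_iff_right_iff_imp]
  rintro ⟨v, -, rfl⟩ χ hχ
  exact (mem_typeAt.1 hχ).1

theorem finite_range_quasistateAt : (Set.range (quasistateAt tr e' Φ V)).Finite := by
  classical
  refine (Φ ∪ Φ.image PF.neg).powerset.powerset.finite_toSet.subset ?_
  rintro _ ⟨w, rfl⟩
  exact Finset.mem_powerset.2 (Finset.filter_subset _ _)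

theorem quasistateAt_eq_of_rel (hE : Equivalence (F.R e')) {v : F.W} (h : F.R e' w v) :
    quasistateAt tr e' Φ V w = quasistateAt tr e' Φ V v := by
  ext t
  simp only [mem_quasistateAt]
  exact exists_congr fun u => and_congr_left fun _ =>
    ⟨hE.trans (hE.symm h), hE.trans h⟩

theorem isTypeP_typeAt (hΦ : SubformulaClosed Φ) (ht : IsTranslation e e' tr) :
    IsTypeP Φ (typeAt tr Φ V w) := by
  refine ⟨fun χ hχ => ?_, fun χ hχ => ?_, fun χ θ h => ?_⟩
  · simpa [eq_comm] using (mem_typeAt.1 hχ).1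
  · rw [neg_mem_typeAt_of_mem hχ, mem_typeAt_of_mem hχ, ht.neg, PVal]
  · rw [mem_typeAt_of_mem h, mem_typeAt_of_mem (hΦ.and_left h),
      mem_typeAt_of_mem (hΦ.and_right h), ht.and, PVal]

theorem isQuasistateP_quasistateAt (hΦ : SubformulaClosed Φ) (ht : IsTranslation e e' tr)
    (hE : Equivalence (F.R e')) : IsQuasistateP e Φ (quasistateAt tr e' Φ V w) := by
  refine ⟨⟨_, mem_quasistateAt.2 ⟨w, hE.refl w, rfl⟩⟩, fun t h => ?_, fun χ hχ t h => ?_⟩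
  · obtain ⟨v, -, rfl⟩ := mem_quasistateAt.1 h
    exact isTypeP_typeAt hΦ ht
  · obtain ⟨v, hv, rfl⟩ := mem_quasistateAt.1 h
    have hχΦ : χ ∈ Φ := hΦ.neg (hΦ.box hχ)
    rw [neg_mem_typeAt_of_mem hχ, ← PF.dia, ht.pval_dia, quasistateAt_eq_of_rel hE hv]
    simp [mem_quasistateAt, mem_typeAt_of_mem hχΦ]

theorem IsTypeP.ext {t t' : Finset (PF M)} (ht : IsTypeP Φ t) (ht' : IsTypeP Φ t')
    (h : ∀ χ ∈ Φ, χ ∈ t ↔ χ ∈ t') : t = t' := by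
  have neg_iff : ∀ χ ∈ Φ, χ.neg ∈ t ↔ χ.neg ∈ t' := fun χ hχ => by
    rw [ht.2.1 χ hχ, ht'.2.1 χ hχ, h χ hχ]
  ext χ
  constructor <;> intro hχ
  · obtain hΦ | ⟨θ, hθ, rfl⟩ := ht.1 χ hχ
    exacts [(h χ hΦ).1 hχ, (neg_iff θ hθ).1 hχ]
  · obtain hΦ | ⟨θ, hθ, rfl⟩ := ht'.1 χ hχ
    exacts [(h χ hΦ).2 hχ, (neg_iff θ hθ).2 hχ]

theorem typeAt_eq_typeAt_iff (hΦ : SubformulaClosed Φ) (ht : IsTranslation e e' tr) {e'' : M''}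
    {tr' : PF M → PF M''} (ht' : IsTranslation e e'' tr') {F' : KFrame M''}
    {V' : ℕ → F'.W → Prop} {w' : F'.W} :
    typeAt tr Φ V w = typeAt tr' Φ V' w' ↔
      ∀ χ ∈ Φ, (PVal V (tr χ) w ↔ PVal V' (tr' χ) w') := by
  constructor
  · intro h χ hχ
    rw [← mem_typeAt_of_mem hχ, h, mem_typeAt_of_mem hχ]
  · refine fun h => (isTypeP_typeAt hΦ ht).ext (isTypeP_typeAt hΦ ht') fun χ hχ => ?_
    rw [mem_typeAt_of_mem hχ, mem_typeAt_of_mem hχ, h χ hχ]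

theorem pval_typeConjP_iff (hΦ : SubformulaClosed Φ) (ht : IsTranslation e e' tr)
    {t : Finset (PF M)} (h : IsTypeP Φ t) :
    PVal V (tr (typeConjP t)) w ↔ typeAt tr Φ V w = t := by
  simp only [typeConjP, ht.pval_bigAndP, Finset.mem_toList]
  constructor
  · refine fun H => (isTypeP_typeAt hΦ ht).ext h fun χ hχ => ?_
    rw [mem_typeAt_of_mem hχ]
    refine ⟨fun hv => by_contra fun hn => ?_, H χ⟩
    have hneg := H _ ((h.2.1 χ hχ).2 hn)
    rw [ht.neg] at hneg
    exact hneg hv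
  · rintro rfl χ hχ
    exact (mem_typeAt.1 hχ).2

theorem pval_qhatP_iff (hΦ : SubformulaClosed Φ) (ht : IsTranslation e e' tr)
    {q : Finset (Finset (PF M))} (hq : ∀ t ∈ q, IsTypeP Φ t) :
    PVal V (tr (qhatP e q)) w ↔ quasistateAt tr e' Φ V w = q := by
  have type_iff : ∀ t ∈ q, ∀ v, PVal V (tr (typeConjP t)) v ↔ typeAt tr Φ V v = t :=
    fun t h v => pval_typeConjP_iff hΦ ht (hq t h)
  rw [qhatP, ht.and, PVal, ht.box, PVal, Finset.Subset.antisymm_iff]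
  simp only [ht.pval_bigOrP, ht.pval_bigAndP, List.mem_map, Finset.mem_toList,
    exists_exists_and_eq_and, forall_exists_index, and_imp, forall_apply_eq_imp_iff₂,
    ht.pval_dia, Finset.subset_iff, mem_quasistateAt]
  refine and_congr (forall₂_congr fun v _ => ⟨?_, fun h => ⟨_, h, (type_iff _ h v).2 rfl⟩⟩)
    (forall₂_congr fun t h => ?_)
  · rintro ⟨t, ht, htrue⟩
    rwa [(type_iff t ht v).1 htrue]
  · exact exists_congr fun v => and_congr_right fun _ => type_iff t h v

theorem pval_QhatP_iff (hΦ : SubformulaClosed Φ) (ht : IsTranslation e e' tr)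
    {Q : Finset (Finset (Finset (PF M)))} (hQ : ∀ q ∈ Q, ∀ t ∈ q, IsTypeP Φ t) :
    PVal V (tr (QhatP e Q)) w ↔ quasistateAt tr e' Φ V w ∈ Q := by
  simp only [QhatP, ht.pval_bigOrP, List.mem_map, Finset.mem_toList, exists_exists_and_eq_and]
  constructor
  · rintro ⟨q, hq, h⟩
    rwa [(pval_qhatP_iff hΦ ht (hQ q hq)).1 h]
  · exact fun h => ⟨_, h, (pval_qhatP_iff hΦ ht (hQ _ h)).2 rfl⟩

theorem range_quasistateAt_eq_iff (hΦ : SubformulaClosed Φ) (ht : IsTranslation e e' tr)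
    {Q : Finset (Finset (Finset (PF M)))} (hQ : ∀ q ∈ Q, ∀ t ∈ q, IsTypeP Φ t) :
    Set.range (quasistateAt tr e' Φ V) = Q ↔
      (∀ w, PVal V (tr (QhatP e Q)) w) ∧ ∀ q ∈ Q, ∃ w, PVal V (tr (qhatP e q)) w := by
  rw [Set.Subset.antisymm_iff, Set.range_subset_iff]
  refine and_congr (forall_congr' fun w => ?_) (forall₂_congr fun q hq => ?_)
  · rw [pval_QhatP_iff hΦ ht hQ, Finset.mem_coe]
  · exact exists_congr fun w => (pval_qhatP_iff hΦ ht (hQ q hq)).symm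

theorem EHomog.mk_typeAt {κ : Cardinal} (hV : EHomog e' V κ) (hΦ : SubformulaClosed Φ)
    (ht : IsTranslation e e' tr) (w : F.W) (t : Finset (PF M)) :
    Cardinal.mk {v // F.R e' w v ∧ typeAt tr Φ V v = t} =
      if t ∈ quasistateAt tr e' Φ V w then κ else 0 := by
  split_ifs with h
  · obtain ⟨v, hv, rfl⟩ := mem_quasistateAt.1 h
    have hom := hV w (tr (typeConjP (typeAt tr Φ V v)))
    simp only [pval_typeConjP_iff hΦ ht (isTypeP_typeAt hΦ ht)] at hom
    exact hom.resolve_left (Cardinal.mk_ne_zero_iff.2 ⟨v, hv, rfl⟩)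
  · rw [Cardinal.mk_eq_zero_iff]
    exact ⟨fun v => h (mem_quasistateAt.2 ⟨v, v.2⟩)⟩

end Quasistates

section Matching

open Cardinal

variable {X Y C C' A T : Type}

theorem exists_equiv_of_mk_fiber_eq (f : X → A) (f' : Y → A)
    (h : ∀ a, #{x // f x = a} = #{y // f' y = a}) : ∃ g : X ≃ Y, ∀ x, f' (g x) = f x :=
  ⟨Equiv.ofFiberEquiv fun a => (Cardinal.eq.1 (h a)).some, Equiv.ofFiberEquiv_map _⟩

/-- First the classes (the fibres of `p` and `p'`) are matched by their labels, then the elements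
of matched classes by their types. -/
theorem exists_equiv_of_mk_class_eq {p : X → C} {p' : Y → C'} {ℓ : C → A} {ℓ' : C' → A}
    {tp : X → T} {tp' : Y → T} (hclass : ∀ a, #{c // ℓ c = a} = #{c // ℓ' c = a})
    (hmem : ∀ c c', ℓ c = ℓ' c' → ∀ t,
      #{x // p x = c ∧ tp x = t} = #{y // p' y = c' ∧ tp' y = t}) :
    ∃ g : X ≃ Y, (∀ x, tp' (g x) = tp x) ∧ ∀ x y, p' (g x) = p' (g y) ↔ p x = p y := by
  obtain ⟨h, hh⟩ := exists_equiv_of_mk_fiber_eq ℓ ℓ' hclass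
  obtain ⟨g, hg⟩ := exists_equiv_of_mk_fiber_eq (fun x => (h (p x), tp x))
    (fun y => (p' y, tp' y)) fun ⟨c, t⟩ => by
      simpa only [Prod.mk.injEq, ← h.eq_symm_apply] using
        hmem (h.symm c) c (by rw [← hh, h.apply_symm_apply]) t
  simp only [Prod.mk.injEq] at hg
  exact ⟨g, fun x => (hg x).2, fun x y => by rw [(hg x).1, (hg y).1, h.apply_eq_iff_eq]⟩

open Classical in
theorem mk_fiber_comp_fst {Λ : Type} [Infinite Λ] (hC : #C ≤ #Λ) (ℓ : C → A) (a : A) :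
    #{x : C × Λ // ℓ x.1 = a} = if a ∈ Set.range ℓ then #Λ else 0 := by
  rw [mk_congr (Equiv.prodSubtypeFstEquivSubtypeProd (p := fun c => ℓ c = a)), mk_prod, lift_id,
    lift_id]
  split_ifs with h
  · obtain ⟨c, rfl⟩ := h
    exact mul_eq_right (aleph0_le_mk Λ) ((mk_subtype_le _).trans hC)
      (mk_ne_zero_iff.2 ⟨⟨c, rfl⟩⟩)
  · have : IsEmpty {c // ℓ c = a} := ⟨fun c => h ⟨c, c.2⟩⟩
    rw [mk_eq_zero, zero_mul]

end Matching

section Copies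

variable {M M1 M2 : Type} [DecidableEq M] {e : M} {Φ : Finset (PF M)}

theorem typeAt_disjointUnion {J : Type} [Nonempty J] {F : J → KFrame M1} {tr : PF M → PF M1}
    (V : ∀ j, ℕ → (F j).W → Prop) (x : (disjointUnion F).W) :
    typeAt tr Φ (sigmaVal V) x = typeAt tr Φ (V x.1) x.2 := by
  ext χ
  simp only [mem_typeAt, ← pval_disjointUnion V]

theorem quasistateAt_disjointUnion {J : Type} [Nonempty J] {F : J → KFrame M1}
    {tr : PF M → PF M1} {e1 : M1} (V : ∀ j, ℕ → (F j).W → Prop) (x : (disjointUnion F).W) :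
    quasistateAt tr e1 Φ (sigmaVal V) x = quasistateAt tr e1 Φ (V x.1) x.2 := by
  ext t
  simp only [mem_quasistateAt, typeAt_disjointUnion]
  constructor
  · rintro ⟨_, ⟨h⟩, ht⟩
    exact ⟨_, h, ht⟩
  · rintro ⟨v, h, ht⟩
    exact ⟨⟨x.1, v⟩, ⟨h⟩, ht⟩

variable {e1 : M1} {e2 : M2} {tr1 : PF M → PF M1} {tr2 : PF M → PF M2}
  {F1 : KFrame M1} {F2 : KFrame M2} {V1 : ℕ → F1.W → Prop} {V2 : ℕ → F2.W → Prop}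
  {κ : Cardinal}

/-- `p` sends each world to (a name of) its `e`-class, and `ℓ` labels each class with the
quasistate it realises. -/
structure IsClassLabelling (tr : PF M → PF M1) (e1 : M1) (Φ : Finset (PF M)) {F : KFrame M1}
    (V : ℕ → F.W → Prop) {C : Type} (p : F.W → C) (ℓ : C → Finset (Finset (PF M))) : Prop where
  surjective : p.Surjective
  rel_iff : ∀ x y, F.R e1 x y ↔ p y = p x
  label : ∀ x, ℓ (p x) = quasistateAt tr e1 Φ V x

theorem exists_isClassLabelling (hE1 : Equivalence (F1.R e1)) :
    ∃ (C : Type) (p : F1.W → C) (ℓ : C → Finset (Finset (PF M))),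
      IsClassLabelling tr1 e1 Φ V1 p ℓ := by
  let S : Setoid F1.W := ⟨F1.R e1, hE1⟩
  exact ⟨Quotient S, Quotient.mk S, Quotient.lift _ fun _ _ => quasistateAt_eq_of_rel hE1,
    Quotient.mk_surjective, fun x y => (Quotient.eq (r := S)).symm.trans eq_comm, fun _ => rfl⟩

section IsClassLabelling

variable {C1 C2 : Type} {p1 : F1.W → C1} {p2 : F2.W → C2}
  {ℓ1 : C1 → Finset (Finset (PF M))} {ℓ2 : C2 → Finset (Finset (PF M))}

theorem IsClassLabelling.range_eq (hp : IsClassLabelling tr1 e1 Φ V1 p1 ℓ1) :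
    Set.range ℓ1 = Set.range (quasistateAt tr1 e1 Φ V1) := by
  rw [← hp.surjective.range_comp, ← funext hp.label, Function.comp_def]

theorem IsClassLabelling.sigma (hp : IsClassLabelling tr1 e1 Φ V1 p1 ℓ1) (Λ : Type)
    [Nonempty Λ] :
    IsClassLabelling tr1 e1 Φ (F := disjointUnion fun _ : Λ => F1) (sigmaVal fun _ => V1)
      (fun x => (p1 x.2, x.1)) (fun c => ℓ1 c.1) where
  surjective := fun ⟨c, j⟩ => by
    obtain ⟨x, rfl⟩ := hp.surjective c
    exact ⟨⟨j, x⟩, rfl⟩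
  rel_iff := fun ⟨i, x⟩ ⟨j, y⟩ => by
    simp only [Prod.mk.injEq, ← hp.rel_iff]
    constructor
    · rintro ⟨h⟩
      exact ⟨h, rfl⟩
    · rintro ⟨h, rfl⟩
      exact ⟨h⟩
  label x := (hp.label x.2).trans (quasistateAt_disjointUnion (fun _ => V1) x).symm

theorem IsClassLabelling.exists_equiv (hp1 : IsClassLabelling tr1 e1 Φ V1 p1 ℓ1)
    (hp2 : IsClassLabelling tr2 e2 Φ V2 p2 ℓ2) (hV1 : EHomog e1 V1 κ) (hV2 : EHomog e2 V2 κ)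
    (hΦ : SubformulaClosed Φ) (ht1 : IsTranslation e e1 tr1) (ht2 : IsTranslation e e2 tr2)
    (hclass : ∀ q, Cardinal.mk {c // ℓ1 c = q} = Cardinal.mk {c // ℓ2 c = q}) :
    ∃ g : F1.W ≃ F2.W, (∀ x, typeAt tr2 Φ V2 (g x) = typeAt tr1 Φ V1 x) ∧
      ∀ x y, F2.R e2 (g x) (g y) ↔ F1.R e1 x y := by
  have hmem : ∀ c1 c2, ℓ1 c1 = ℓ2 c2 → ∀ t,
      Cardinal.mk {x // p1 x = c1 ∧ typeAt tr1 Φ V1 x = t} =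
        Cardinal.mk {y // p2 y = c2 ∧ typeAt tr2 Φ V2 y = t} := by
    intro c1 c2 hc t
    obtain ⟨x, rfl⟩ := hp1.surjective c1
    obtain ⟨y, rfl⟩ := hp2.surjective c2
    simp only [← hp1.rel_iff, ← hp2.rel_iff, hV1.mk_typeAt hΦ ht1, hV2.mk_typeAt hΦ ht2,
      ← hp1.label, ← hp2.label, hc]
  obtain ⟨g, hg, hgE⟩ := exists_equiv_of_mk_class_eq hclass hmem
  exact ⟨g, hg, fun x y => by rw [hp1.rel_iff, hp2.rel_iff, hgE]⟩

end IsClassLabelling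

/-- With as many copies as there are classes in the two models together, each quasistate is realised
by equally many classes on both sides. -/
theorem EHomog.exists_equiv_disjointUnion (hV1 : EHomog e1 V1 κ) (hV2 : EHomog e2 V2 κ)
    (hΦ : SubformulaClosed Φ) (ht1 : IsTranslation e e1 tr1) (ht2 : IsTranslation e e2 tr2)
    (hE1 : Equivalence (F1.R e1)) (hE2 : Equivalence (F2.R e2))
    (hrange : Set.range (quasistateAt tr1 e1 Φ V1) = Set.range (quasistateAt tr2 e2 Φ V2)) :
    ∃ (Λ : Type) (_ : Nonempty Λ)
      (g : (disjointUnion fun _ : Λ => F1).W ≃ (disjointUnion fun _ : Λ => F2).W),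
      (∀ x, typeAt tr2 Φ (sigmaVal fun _ => V2) (g x) = typeAt tr1 Φ (sigmaVal fun _ => V1) x) ∧
        ∀ x y, SigmaRel (fun _ => F2) e2 (g x) (g y) ↔ SigmaRel (fun _ => F1) e1 x y := by
  obtain ⟨C1, p1, ℓ1, hp1⟩ := exists_isClassLabelling (tr1 := tr1) (V1 := V1) (Φ := Φ) hE1
  obtain ⟨C2, p2, ℓ2, hp2⟩ := exists_isClassLabelling (tr1 := tr2) (V1 := V2) (Φ := Φ) hE2
  let Λ : Type := ℕ ⊕ C1 ⊕ C2
  have hΛ1 : Cardinal.mk C1 ≤ Cardinal.mk Λ :=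
    Cardinal.mk_le_of_injective (Sum.inr_injective.comp Sum.inl_injective)
  have hΛ2 : Cardinal.mk C2 ≤ Cardinal.mk Λ :=
    Cardinal.mk_le_of_injective (Sum.inr_injective.comp Sum.inr_injective)
  have hclass : ∀ q, Cardinal.mk {c : C1 × Λ // ℓ1 c.1 = q} =
      Cardinal.mk {c : C2 × Λ // ℓ2 c.1 = q} := fun q => by
    rw [mk_fiber_comp_fst hΛ1, mk_fiber_comp_fst hΛ2, hp1.range_eq, hp2.range_eq, hrange]
  exact ⟨Λ, inferInstance, (hp1.sigma Λ).exists_equiv (hp2.sigma Λ) (.sigma fun _ => hV1)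
    (.sigma fun _ => hV2) hΦ ht1 ht2 hclass⟩

end Copies

section Fusion

variable {M1 M2 : Type} {L1 : Set (PF (Option M1))} {L2 : Set (PF (Option M2))}

theorem isPLogic_sInter {M : Type} {S : Set (Set (PF M))} (hS : ∀ L ∈ S, IsPLogic L) :
    IsPLogic (⋂₀ S) where
  taut χ h L hL := (hS L hL).taut χ h
  kax m n k L hL := (hS L hL).kax m n k
  mp χ θ h h' L hL := (hS L hL).mp χ θ (h L hL) (h' L hL)
  nec m χ h L hL := (hS L hL).nec m χ (h L hL)
  subst σ χ h L hL := (hS L hL).subst σ χ (h L hL)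

theorem isPLogic_fusionE : IsPLogic (fusionE L1 L2) :=
  isPLogic_sInter fun _ h => h.1

theorem mapOp_inl_mem_fusionE {χ : PF (Option M1)} (hχ : χ ∈ L1) :
    χ.mapOp (Option.map .inl) ∈ fusionE L1 L2 :=
  fun _ hL => hL.2.1 ⟨χ, hχ, rfl⟩

theorem mapOp_inr_mem_fusionE {χ : PF (Option M2)} (hχ : χ ∈ L2) :
    χ.mapOp (Option.map .inr) ∈ fusionE L1 L2 :=
  fun _ hL => hL.2.2 ⟨χ, hχ, rfl⟩

theorem containsS5_fusionE (hS : ContainsS5 L1 none) : ContainsS5 (fusionE L1 L2) none :=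
  ⟨mapOp_inl_mem_fusionE hS.1, mapOp_inl_mem_fusionE hS.2.1, mapOp_inl_mem_fusionE hS.2.2⟩

theorem frameFor_fusionE {F : KFrame (Option (M1 ⊕ M2))}
    (h1 : FrameFor (F.reduct (Option.map .inl)) L1)
    (h2 : FrameFor (F.reduct (Option.map .inr)) L2) : FrameFor F (fusionE L1 L2) := by
  refine fun χ hχ => hχ {χ | PValid F χ} ⟨isPLogic_setOf_pValid F, ?_, ?_⟩
  · rintro _ ⟨θ, hθ, rfl⟩ V w
    exact (pval_mapOp _ V θ w).2 (h1 θ hθ V w)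
  · rintro _ ⟨θ, hθ, rfl⟩ V w
    exact (pval_mapOp _ V θ w).2 (h2 θ hθ V w)

end Fusion

section Gluing

theorem FrameFor.of_equiv {M : Type} {L : Set (PF M)} {F G : KFrame M} (hF : FrameFor F L)
    (g : F.W ≃ G.W) (hg : ∀ m x y, G.R m (g x) (g y) ↔ F.R m x y) : FrameFor G L := by
  refine frameFor_of_cover fun u => ⟨F, hF, g, ⟨(hg _ _ _).2, fun {m w u} h => ?_⟩,
    g.surjective u⟩
  exact ⟨g.symm u, (hg _ _ _).1 (by rwa [g.apply_symm_apply]), g.apply_symm_apply u⟩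

/-- The frame on the worlds of `F1` whose operators from the second signature are those of `F2`,
transported along the bijection `g`; the shared operator `none` is taken from `F1`. -/
abbrev glue {M1 M2 : Type} (F1 : KFrame (Option M1)) (F2 : KFrame (Option M2))
    (g : F1.W → F2.W) : KFrame (Option (M1 ⊕ M2)) where
  W := F1.W
  ne := F1.ne
  R
    | none => F1.R none
    | some (.inl a) => F1.R (some a)
    | some (.inr b) => fun x y => F2.R (some b) (g x) (g y)

theorem frameFor_glue {M1 M2 : Type} {L1 : Set (PF (Option M1))} {L2 : Set (PF (Option M2))}
    {F1 : KFrame (Option M1)} {F2 : KFrame (Option M2)} (h1 : FrameFor F1 L1)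
    (h2 : FrameFor F2 L2) (g : F1.W ≃ F2.W)
    (hg : ∀ x y, F2.R none (g x) (g y) ↔ F1.R none x y) :
    FrameFor (glue F1 F2 g) (fusionE L1 L2) := by
  refine frameFor_fusionE (h1.of_equiv (.refl _) fun m x y => ?_)
    (h2.of_equiv g.symm fun m x y => ?_)
  · cases m <;> rfl
  · cases m with
    | none => simpa using (hg (g.symm x) (g.symm y)).symm
    | some b => simp

theorem pval_glue {F1 F2 : KFrame OU} {V1 : ℕ → F1.W → Prop} {V2 : ℕ → F2.W → Prop}
    {g : F1.W → F2.W} (hg : g.Surjective) {s : PF OC → ℕ} {Φ : Finset (PF OC)}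
    (hΦ : SubformulaClosed Φ)
    (hagree : ∀ χ ∈ Φ, ∀ x, PVal V2 (sur2P s χ) (g x) ↔ PVal V1 (sur1P s χ) x)
    {χ : PF OC} (hχ : χ ∈ Φ) (x : F1.W) :
    PVal (F := glue F1 F2 g) V1 χ x ↔ PVal V1 (sur1P s χ) x := by
  induction χ generalizing x with
  | atom n => rfl
  | neg χ ih => simp [sur1P, PVal, ih (hΦ.neg hχ)]
  | and χ θ ihχ ihθ => simp [sur1P, PVal, ihχ (hΦ.and_left hχ), ihθ (hΦ.and_right hχ)]
  | box m χ ih =>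
    have hχ' := hΦ.box hχ
    obtain _ | a | b := m
    · simp [sur1P, PVal, ih hχ']
    · simp [sur1P, PVal, ih hχ']
    · rw [← hagree _ hχ]
      simp [sur2P, PVal, ih hχ', ← hagree χ hχ', hg.forall]

theorem exists_fusion_model {L1 L2 : Set (PF OU)} (hS1 : ContainsS5 L1 none)
    (hS2 : ContainsS5 L2 none) {s : PF OC → ℕ} {Φ : Finset (PF OC)} (hΦ : SubformulaClosed Φ)
    {κ : Cardinal} {F1 F2 : KFrame OU} {V1 : ℕ → F1.W → Prop} {V2 : ℕ → F2.W → Prop}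
    {α1 α2 : PF OU} (hV1 : IsHomogModel L1 none κ α1 V1) (hV2 : IsHomogModel L2 none κ α2 V2)
    (hrange : Set.range (quasistateAt (sur1P s) none Φ V1) =
      Set.range (quasistateAt (sur2P s) none Φ V2)) :
    ∃ F : KFrame OC, FrameFor F (fusionE L1 L2) ∧ ∃ (V : ℕ → F.W → Prop) (p : F.W → F1.W),
      p.Surjective ∧ ∀ χ ∈ Φ, ∀ x, PVal V χ x ↔ PVal V1 (sur1P s χ) (p x) := by
  have ht1 := isTranslation_sur1P s
  have ht2 := isTranslation_sur2P s
  obtain ⟨Λ, _, g, hg, hgE⟩ := hV1.homog.exists_equiv_disjointUnion hV2.homog hΦ ht1 ht2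
    (hV1.frameFor.equivalence hS1) (hV2.frameFor.equivalence hS2) hrange
  have hagree : ∀ χ ∈ Φ, ∀ x, PVal (sigmaVal fun _ => V2) (sur2P s χ) (g x) ↔
      PVal (sigmaVal fun _ => V1) (sur1P s χ) x :=
    fun χ hχ x => (typeAt_eq_typeAt_iff hΦ ht2 ht1).1 (hg x) χ hχ
  refine ⟨_, frameFor_glue (.sigma fun _ => hV1.frameFor) (.sigma fun _ => hV2.frameFor) g hgE,
    sigmaVal fun _ => V1, fun x => x.2, fun w => ⟨⟨Classical.arbitrary Λ, w⟩, rfl⟩,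
    fun χ hχ x => ?_⟩
  rw [pval_glue g.surjective hΦ hagree hχ, pval_disjointUnion]

end Gluing

section CanonicalModel

variable {M : Type} {T Δ : Set (PF M)}

@[simp]
theorem tautEval_imp (v : PF M → Prop) (χ θ : PF M) :
    tautEval v (χ.imp θ) ↔ (tautEval v χ → tautEval v θ) := by
  simp [PF.imp, tautEval]

@[simp]
theorem tautEval_neg (v : PF M → Prop) (χ : PF M) : tautEval v χ.neg ↔ ¬ tautEval v χ :=
  Iff.rfl

/-- Sets of formulas containing the tautologies and closed under Modus Ponens. -/
structure IsTheory (T : Set (PF M)) : Prop where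
  taut : ∀ {χ}, IsTaut χ → χ ∈ T
  mp : ∀ {χ θ}, χ.imp θ ∈ T → χ ∈ T → θ ∈ T

namespace IsTheory

theorem mem_of_taut_imp (hT : IsTheory T) {χ θ : PF M} (h : IsTaut (χ.imp θ)) (hχ : χ ∈ T) :
    θ ∈ T :=
  hT.mp (hT.taut h) hχ

theorem mem_of_taut_imp_imp (hT : IsTheory T) {χ θ ξ : PF M} (h : IsTaut (χ.imp (θ.imp ξ)))
    (hχ : χ ∈ T) (hθ : θ ∈ T) : ξ ∈ T :=
  hT.mp (hT.mem_of_taut_imp h hχ) hθ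

theorem setOf_imp_mem (hT : IsTheory T) (χ : PF M) : IsTheory {θ | χ.imp θ ∈ T} where
  taut h := hT.taut fun v => by simpa using fun _ => h v
  mp h h' := hT.mem_of_taut_imp_imp (fun v => by simp only [tautEval_imp]; tauto) h h'

theorem sUnion {S : Set (Set (PF M))} (hS : ∀ T ∈ S, IsTheory T) (hchain : IsChain (· ⊆ ·) S)
    (hne : S.Nonempty) : IsTheory (⋃₀ S) where
  taut h := hne.elim fun T hT => ⟨T, hT, (hS T hT).taut h⟩
  mp := by
    rintro χ θ ⟨T, hT, h⟩ ⟨T', hT', h'⟩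
    obtain hle | hle := hchain.total hT hT'
    · exact ⟨T', hT', (hS T' hT').mp (hle h) h'⟩
    · exact ⟨T, hT, (hS T hT).mp h (hle h')⟩

end IsTheory

/-- Complete consistent theories, the worlds of the canonical model. -/
structure IsCompleteTheory (Δ : Set (PF M)) : Prop extends IsTheory Δ where
  neg_mem_iff : ∀ χ, χ.neg ∈ Δ ↔ χ ∉ Δ

theorem IsCompleteTheory.and_mem_iff (hΔ : IsCompleteTheory Δ) (χ θ : PF M) :
    χ.and θ ∈ Δ ↔ χ ∈ Δ ∧ θ ∈ Δ :=
  ⟨fun h => ⟨hΔ.mem_of_taut_imp (fun v => by simp only [tautEval_imp, tautEval]; tauto) h,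
    hΔ.mem_of_taut_imp (fun v => by simp [tautEval]) h⟩,
    fun h => hΔ.mem_of_taut_imp_imp (fun v => by simp only [tautEval_imp, tautEval]; tauto) h.1 h.2⟩

theorem isCompleteTheory_of_maximal {χ : PF M}
    (hΔ : Maximal (fun Δ => IsTheory Δ ∧ χ ∉ Δ) Δ) : IsCompleteTheory Δ := by
  have hT := hΔ.prop.1
  have weakening (θ ξ : PF M) : IsTaut (ξ.imp (θ.imp ξ)) := fun v => by
    simp only [tautEval_imp]; tauto
  have explosion (θ : PF M) : IsTaut (θ.neg.imp (θ.imp χ)) := fun v => by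
    simp only [tautEval_imp, tautEval_neg]; tauto
  have by_cases_taut (θ : PF M) : IsTaut ((θ.neg.imp χ).imp ((θ.imp χ).imp χ)) := fun v => by
    simp only [tautEval_imp, tautEval_neg]; tauto
  have imp_mem {θ : PF M} (hθ : θ ∉ Δ) : θ.imp χ ∈ Δ := by
    by_contra hχ
    have hle : Δ ⊆ {ξ | θ.imp ξ ∈ Δ} := fun ξ => hT.mem_of_taut_imp (weakening θ ξ)
    exact hθ (hΔ.le_of_ge ⟨hT.setOf_imp_mem θ, hχ⟩ hle (hT.taut fun v => by simp))
  refine ⟨hT, fun θ => ⟨fun hneg hθ => ?_, fun hθ => by_contra fun hneg => ?_⟩⟩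
  · exact hΔ.prop.2 (hT.mem_of_taut_imp_imp (explosion θ) hneg hθ)
  · exact hΔ.prop.2 (hT.mem_of_taut_imp_imp (by_cases_taut θ) (imp_mem hneg) (imp_mem hθ))

theorem IsTheory.exists_isCompleteTheory (hT : IsTheory T) {χ : PF M} (hχ : χ ∉ T) :
    ∃ Δ, IsCompleteTheory Δ ∧ T ⊆ Δ ∧ χ ∉ Δ := by
  obtain ⟨Δ, hTΔ, hΔ⟩ := zorn_subset_nonempty {Δ | IsTheory Δ ∧ χ ∉ Δ}
    (fun S hS hchain hne => ⟨⋃₀ S, ⟨.sUnion (fun Δ h => (hS h).1) hchain hne,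
      fun ⟨Δ, h, hχΔ⟩ => (hS h).2 hχΔ⟩, fun _ => Set.subset_sUnion_of_mem⟩) T ⟨hT, hχ⟩
  exact ⟨Δ, isCompleteTheory_of_maximal hΔ, hTΔ, hΔ.prop.2⟩

/-- Theories closed under Necessitation and containing all instances of the axiom K. -/
structure IsNormalTheory (T : Set (PF M)) : Prop extends IsTheory T where
  kax : ∀ m χ θ, PF.imp (.box m (χ.imp θ)) (PF.imp (.box m χ) (.box m θ)) ∈ T
  nec : ∀ m {χ}, χ ∈ T → PF.box m χ ∈ T

theorem IsNormalTheory.setOf_box_mem (hT : IsNormalTheory T) (hΔ : IsTheory Δ) (hTΔ : T ⊆ Δ)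
    (m : M) : IsTheory {χ | PF.box m χ ∈ Δ} where
  taut h := hTΔ (hT.nec m (hT.taut h))
  mp h h' := hΔ.mp (hΔ.mp (hTΔ (hT.kax m _ _)) h) h'

theorem isNormalTheory_setOf_pGlobal {L : Set (PF M)} (hL : IsPLogic L) (φ : PF M) :
    IsNormalTheory {χ | PGlobal L φ χ} where
  taut h := .ax (hL.taut _ h)
  mp := .mp
  kax m χ θ := .ax (hL.subst (fun n => if n = 0 then χ else θ) _ (hL.kax m 0 1))
  nec m _ := .nec m

/-- The canonical frame of a theory `T`: its worlds are the complete theories extending `T`. -/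
abbrev canonicalFrame (T : Set (PF M)) (hne : Nonempty {Δ // IsCompleteTheory Δ ∧ T ⊆ Δ}) :
    KFrame M where
  W := {Δ // IsCompleteTheory Δ ∧ T ⊆ Δ}
  ne := hne
  R m Δ Δ' := ∀ χ, PF.box m χ ∈ Δ.1 → χ ∈ Δ'.1

theorem IsNormalTheory.pval_canonicalFrame (hT : IsNormalTheory T)
    (hne : Nonempty {Δ // IsCompleteTheory Δ ∧ T ⊆ Δ}) (χ : PF M)
    (Δ : (canonicalFrame T hne).W) :
    PVal (F := canonicalFrame T hne) (fun n Δ => .atom n ∈ Δ.1) χ Δ ↔ χ ∈ Δ.1 := by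
  induction χ generalizing Δ with
  | atom n => rfl
  | neg χ ih => rw [PVal, ih, Δ.2.1.neg_mem_iff]
  | and χ θ ihχ ihθ => rw [PVal, ihχ, ihθ, Δ.2.1.and_mem_iff]
  | box m χ ih =>
    simp only [PVal, ih]
    refine ⟨fun h => by_contra fun hχ => ?_, fun h Δ' hΔ' => hΔ' χ h⟩
    obtain ⟨Δ', hΔ', hle, hχ'⟩ :=
      (hT.setOf_box_mem Δ.2.1.toIsTheory Δ.2.2 m).exists_isCompleteTheory hχ
    have hTΔ' : T ⊆ Δ' := fun θ hθ => hle (Δ.2.2 (hT.nec m hθ))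
    exact hχ' (h ⟨Δ', hΔ', hTΔ'⟩ fun θ hθ => hle hθ)

theorem equivalence_of_pval_containsS5 {L : Set (PF M)} {e : M} (hL : IsPLogic L)
    (hS : ContainsS5 L e) {F : KFrame M} {V : ℕ → F.W → Prop}
    (hV : ∀ χ ∈ L, ∀ w, PVal V χ w)
    (htight : ∀ w v, (∀ χ, PVal V (.box e χ) w → PVal V χ v) → F.R e w v) :
    Equivalence (F.R e) := by
  have hT χ w : PVal V (.box e χ) w → PVal V χ w :=
    (pval_imp V _ _ w).1 (hV _ (hL.subst (fun _ => χ) _ hS.1) w)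
  have h5 (χ : PF M) w : PVal V (χ.dia e) w → PVal V (.box e (χ.dia e)) w :=
    (pval_imp V _ _ w).1 (hV _ (hL.subst (fun _ => χ) _ hS.2.2) w)
  refine equivalence_of_refl_of_euclidean (fun w => htight w w fun χ => hT χ w)
    fun w u v hu hv => htight u v fun χ hχ => by_contra fun hn => ?_
  have hdia : PVal V (χ.neg.dia e) u :=
    h5 χ.neg w ((pval_dia V e χ.neg w).2 ⟨v, hv, hn⟩) u hu
  obtain ⟨x, hx, hχx⟩ := (pval_dia V e χ.neg u).1 hdia
  exact hχx (hχ x hx)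

theorem exists_model_of_not_pGlobal {L : Set (PF M)} {e : M} (hL : IsPLogic L)
    (hS : ContainsS5 L e) {φ ψ : PF M} (h : ¬ PGlobal L φ ψ) :
    ∃ (F : KFrame M) (V : ℕ → F.W → Prop), Equivalence (F.R e) ∧
      (∀ χ ∈ L, ∀ w, PVal V χ w) ∧ (∀ w, PVal V φ w) ∧ ∃ w, ¬ PVal V ψ w := by
  have hT := isNormalTheory_setOf_pGlobal hL φ
  obtain ⟨Δ, hΔ, hTΔ, hψ⟩ := hT.exists_isCompleteTheory h
  have hne : Nonempty {Δ // IsCompleteTheory Δ ∧ {χ | PGlobal L φ χ} ⊆ Δ} := ⟨Δ, hΔ, hTΔ⟩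
  have truth := hT.pval_canonicalFrame hne
  have hL' : ∀ χ ∈ L, ∀ w, PVal (F := canonicalFrame _ hne) (fun n Δ => .atom n ∈ Δ.1) χ w :=
    fun χ hχ w => (truth χ w).2 (w.2.2 (.ax hχ))
  refine ⟨canonicalFrame _ hne, _, ?_, hL', fun w => (truth φ w).2 (w.2.2 .prem),
    ⟨Δ, hΔ, hTΔ⟩, fun h => hψ ((truth ψ _).1 h)⟩
  exact equivalence_of_pval_containsS5 hL hS hL' fun w v h χ hχ =>
    (truth χ v).1 (h χ ((truth _ w).2 hχ))

end CanonicalModel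

section Surrogates

/-- The valuation on a model of the combined language under which the surrogate letter `s θ`
means `θ`. -/
def surrogateVal (s : PF OC → ℕ) {F : KFrame OC} (V : ℕ → F.W → Prop) (n : ℕ) : F.W → Prop :=
  PVal V (Function.extend s id PF.atom n)

variable {s : PF OC → ℕ} {F : KFrame OC} (V : ℕ → F.W → Prop)

theorem surrogateVal_surrogate (hs : s.Injective) (θ : PF OC) :
    surrogateVal s V (s θ) = PVal V θ := by
  rw [surrogateVal, hs.extend_apply, id]

theorem surrogateVal_of_fresh {n : ℕ} (h : ∀ θ, s θ ≠ n) : surrogateVal s V n = V n := by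
  rw [surrogateVal, Function.extend_apply' _ _ _ fun ⟨θ, hθ⟩ => h θ hθ]
  rfl

theorem pval_surrogateVal {M : Type} (f : M → OC) (χ : PF M) (w : F.W) :
    PVal (F := F.reduct f) (surrogateVal s V) χ w ↔
      PVal V ((χ.mapOp f).substP (Function.extend s id PF.atom)) w := by
  rw [pval_substP, pval_mapOp]
  rfl

theorem pval_surrogateVal_of_mapOp_mem {M : Type} (f : M → OC) {L : Set (PF OC)}
    (hL : IsPLogic L) (hV : ∀ χ ∈ L, ∀ w, PVal V χ w) {χ : PF M} (hχ : χ.mapOp f ∈ L) (w : F.W) :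
    PVal (F := F.reduct f) (surrogateVal s V) χ w :=
  (pval_surrogateVal V f χ w).2 (hV _ (hL.subst _ _ hχ) w)

theorem pval_sur1P (hs : s.Injective) {χ : PF OC} (hχ : ∀ θ, s θ ∉ χ.atoms) (w : F.W) :
    PVal (F := F.reduct (Option.map Sum.inl)) (surrogateVal s V) (sur1P s χ) w ↔
      PVal V χ w := by
  induction χ generalizing w with
  | atom n =>
    have hn : ∀ θ, s θ ≠ n := fun θ => by simpa [PF.atoms] using hχ θ
    rw [sur1P, PVal, surrogateVal_of_fresh V hn, PVal]
  | neg χ ih => simp [sur1P, PVal, ih hχ]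
  | and χ θ ihχ ihθ =>
    simp only [PF.atoms, Finset.mem_union, not_or] at hχ
    simp [sur1P, PVal, ihχ fun θ => (hχ θ).1, ihθ fun θ => (hχ θ).2]
  | box m χ ih =>
    obtain _ | _ | _ := m
    · simp [sur1P, PVal, ih hχ]
    · simp [sur1P, PVal, ih hχ]
    · rw [sur1P, PVal, surrogateVal_surrogate V hs]

theorem pval_sur2P (hs : s.Injective) {χ : PF OC} (hχ : ∀ θ, s θ ∉ χ.atoms) (w : F.W) :
    PVal (F := F.reduct (Option.map Sum.inr)) (surrogateVal s V) (sur2P s χ) w ↔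
      PVal V χ w := by
  induction χ generalizing w with
  | atom n =>
    have hn : ∀ θ, s θ ≠ n := fun θ => by simpa [PF.atoms] using hχ θ
    rw [sur2P, PVal, surrogateVal_of_fresh V hn, PVal]
  | neg χ ih => simp [sur2P, PVal, ih hχ]
  | and χ θ ihχ ihθ =>
    simp only [PF.atoms, Finset.mem_union, not_or] at hχ
    simp [sur2P, PVal, ihχ fun θ => (hχ θ).1, ihθ fun θ => (hχ θ).2]
  | box m χ ih =>
    obtain _ | _ | _ := m
    · simp [sur2P, PVal, ih hχ]
    · rw [sur2P, PVal, surrogateVal_surrogate V hs]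
    · simp [sur2P, PVal, ih hχ]

theorem quasistateAt_reduct {M M' : Type} [DecidableEq M'] {f : M → M'} {e : M}
    {tr : PF M' → PF M} (ht : IsTranslation (f e) e tr) {Φ : Finset (PF M')}
    (hΦ : SubformulaClosed Φ) {F : KFrame M'} {V V' : ℕ → F.W → Prop}
    (h : ∀ χ ∈ Φ, ∀ w, PVal (F := F.reduct f) V' (tr χ) w ↔ PVal V χ w) :
    quasistateAt tr e Φ (F := F.reduct f) V' = quasistateAt id (f e) Φ V := by
  have htype : typeAt tr Φ (F := F.reduct f) V' = typeAt id Φ V :=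
    funext fun w => (typeAt_eq_typeAt_iff hΦ ht (isTranslation_id (f e))).2 fun χ hχ => h χ hχ w
  ext w t
  rw [mem_quasistateAt, mem_quasistateAt, htype]

end Surrogates

section Criterion

/-- Condition (iii) of the criterion: `Q` consists of `Φ`-quasistates and satisfies (C1), (C2)
and (C3). -/
def IsQuasistateWitness (L1 L2 : Set (PF OU)) (s : PF OC → ℕ) (φ ψ : PF OC)
    (Φ : Finset (PF OC)) (Q : Finset (Finset (Finset (PF OC)))) : Prop :=
  (∀ q ∈ Q, IsQuasistateP none Φ q) ∧
  ¬ PGlobal L1 (PF.and (sur1P s φ) (sur1P s (QhatP none Q))) (sur1P s ψ) ∧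
  (∀ q ∈ Q, ¬ PGlobal L1 (PF.and (sur1P s φ) (sur1P s (QhatP none Q)))
    (PF.neg (sur1P s (qhatP none q)))) ∧
  ∀ q ∈ Q, ¬ PGlobal L2 (sur2P s (QhatP none Q)) (PF.neg (sur2P s (qhatP none q)))

variable {L1 L2 : Set (PF OU)} {φ ψ : PF OC} {Φ : Finset (PF OC)} {s : PF OC → ℕ}

theorem exists_isQuasistateWitness (hS1 : ContainsS5 L1 none) (hΦ : SubformulaClosed Φ)
    (hφ : φ ∈ Φ) (hψ : ψ ∈ Φ) (hs : s.Injective) (hfresh : ∀ χ ∈ Φ, ∀ θ, s θ ∉ χ.atoms)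
    (h : ¬ PGlobal (fusionE L1 L2) φ ψ) : ∃ Q, IsQuasistateWitness L1 L2 s φ ψ Φ Q := by
  obtain ⟨F, V, hE, hL, hVφ, w, hw⟩ :=
    exists_model_of_not_pGlobal isPLogic_fusionE (containsS5_fusionE hS1) h
  obtain ⟨Q, hQ⟩ := (finite_range_quasistateAt (tr := id) (e' := none) (Φ := Φ)
    (V := V)).exists_finset_coe
  have hquasi : ∀ q ∈ Q, IsQuasistateP none Φ q := fun q hq => by
    obtain ⟨v, rfl⟩ : q ∈ Set.range (quasistateAt id none Φ V) := hQ ▸ Finset.mem_coe.2 hq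
    exact isQuasistateP_quasistateAt hΦ (isTranslation_id none) hE
  have agree1 := fun χ hχ => pval_sur1P V hs (hfresh χ hχ)
  have agree2 := fun χ hχ => pval_sur2P V hs (hfresh χ hχ)
  have hL1 := fun χ (hχ : χ ∈ L1) => pval_surrogateVal_of_mapOp_mem (s := s) V _ isPLogic_fusionE hL
    (mapOp_inl_mem_fusionE hχ)
  have hL2 := fun χ (hχ : χ ∈ L2) => pval_surrogateVal_of_mapOp_mem (s := s) V _ isPLogic_fusionE hL
    (mapOp_inr_mem_fusionE hχ)
  have htypes : ∀ q ∈ Q, ∀ t ∈ q, IsTypeP Φ t := fun q hq => (hquasi q hq).2.1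
  obtain ⟨hQ1, hq1⟩ := (range_quasistateAt_eq_iff hΦ (isTranslation_sur1P s) htypes).1
    ((congrArg Set.range (quasistateAt_reduct (isTranslation_sur1P s) hΦ agree1)).trans hQ.symm)
  obtain ⟨hQ2, hq2⟩ := (range_quasistateAt_eq_iff hΦ (isTranslation_sur2P s) htypes).1
    ((congrArg Set.range (quasistateAt_reduct (isTranslation_sur2P s) hΦ agree2)).trans hQ.symm)
  have hprem1 := fun w => And.intro ((agree1 φ hφ w).2 (hVφ w)) (hQ1 w)
  refine ⟨Q, hquasi, fun h => ?_, fun q hq h => ?_, fun q hq h => ?_⟩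
  · have hψ1 := h.sound (F := F.reduct (Option.map Sum.inl)) hL1 hprem1 w
    exact hw ((agree1 ψ hψ w).1 hψ1)
  · obtain ⟨v, hv⟩ := hq1 q hq
    exact h.sound hL1 hprem1 v hv
  · obtain ⟨v, hv⟩ := hq2 q hq
    exact h.sound hL2 hQ2 v hv

theorem IsQuasistateWitness.exists_model {Q : Finset (Finset (Finset (PF OC)))}
    (hQ : IsQuasistateWitness L1 L2 s φ ψ Φ Q) (hS1 : ContainsS5 L1 none)
    (hS2 : ContainsS5 L2 none) (hH1 : AdmitsEHomogGlobal none L1)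
    (hH2 : AdmitsEHomogGlobal none L2) (hΦ : SubformulaClosed Φ) (hφ : φ ∈ Φ) (hψ : ψ ∈ Φ) :
    ∃ F : KFrame OC, FrameFor F (fusionE L1 L2) ∧
      ∃ V : ℕ → F.W → Prop, (∀ w, PVal V φ w) ∧ ∃ w, ¬ PVal V ψ w := by
  obtain ⟨hquasi, C1, C2, C3⟩ := hQ
  have htypes : ∀ q ∈ Q, ∀ t ∈ q, IsTypeP Φ t := fun q hq => (hquasi q hq).2.1
  obtain ⟨κ₁, hκ₁⟩ := hH1.exists_isHomogModel
  obtain ⟨κ₂, hκ₂⟩ := hH2.exists_isHomogModel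
  obtain ⟨F1, V1, hV1, hrefute1⟩ := hκ₁ (max κ₁ κ₂) (le_max_left _ _) _
    (insert (sur1P s ψ) ((fun q => (sur1P s (qhatP none q)).neg) '' Q)) (Set.insert_nonempty _ _)
    (Set.forall_mem_insert.2 ⟨C1, Set.forall_mem_image.2 C2⟩)
  obtain ⟨⟨w, hw⟩, hq1⟩ := Set.forall_mem_insert.1 hrefute1
  have hrange1 : Set.range (quasistateAt (sur1P s) none Φ V1) = Q :=
    (range_quasistateAt_eq_iff hΦ (isTranslation_sur1P s) htypes).2
      ⟨fun w => (hV1.premise w).2, fun q hq => by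
        simpa only [PVal, not_not] using hq1 _ ⟨q, hq, rfl⟩⟩
  have hQne : (Q : Set (Finset (Finset (PF OC)))).Nonempty := hrange1 ▸ ⟨_, w, rfl⟩
  obtain ⟨F2, V2, hV2, hq2⟩ := hκ₂ (max κ₁ κ₂) (le_max_right _ _) _
    ((fun q => (sur2P s (qhatP none q)).neg) '' Q) (hQne.image _) (Set.forall_mem_image.2 C3)
  have hrange2 : Set.range (quasistateAt (sur2P s) none Φ V2) = Q :=
    (range_quasistateAt_eq_iff hΦ (isTranslation_sur2P s) htypes).2
      ⟨hV2.premise, fun q hq => by simpa only [PVal, not_not] using hq2 _ ⟨q, hq, rfl⟩⟩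
  obtain ⟨F, hF, V, p, hp, hVp⟩ :=
    exists_fusion_model hS1 hS2 hΦ hV1 hV2 (hrange1.trans hrange2.symm)
  obtain ⟨x, rfl⟩ := hp w
  exact ⟨F, hF, V, fun y => (hVp φ hφ y).2 (hV1.premise _).1, x, fun h => hw ((hVp ψ hψ x).1 h)⟩

theorem global_quasistate_criterionP_general (hS1 : ContainsS5 L1 none)
    (hS2 : ContainsS5 L2 none) (hH1 : AdmitsEHomogGlobal none L1)
    (hH2 : AdmitsEHomogGlobal none L2) (hΦ : SubformulaClosed Φ) (hφ : φ ∈ Φ) (hψ : ψ ∈ Φ)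
    (hs : s.Injective) (hfresh : ∀ χ ∈ Φ, ∀ θ, s θ ∉ χ.atoms) :
    [¬ PGlobal (fusionE L1 L2) φ ψ,
      ∃ F : KFrame OC, FrameFor F (fusionE L1 L2) ∧
        ∃ V : ℕ → F.W → Prop, (∀ w, PVal V φ w) ∧ ∃ w, ¬ PVal V ψ w,
      ∃ Q, IsQuasistateWitness L1 L2 s φ ψ Φ Q].TFAE := by
  tfae_have 1 → 3 := exists_isQuasistateWitness hS1 hΦ hφ hψ hs hfresh
  tfae_have 3 → 2 := fun ⟨_, hQ⟩ => hQ.exists_model hS1 hS2 hH1 hH2 hΦ hφ hψ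
  tfae_have 2 → 1 := fun ⟨_, hF, V, hφ, w, hw⟩ h => hw (h.sound (fun χ hχ => hF χ hχ V) hφ w)
  tfae_finish

end Criterion

/-- The quasistate criterion for global consequence in the
fusion `L1 ⊗_E L2` of two bimodal logics sharing the S5 operator `□_E`
(designated by `none`).  The surrogate letters are given by an injective map
`s` whose values are fresh for `Φ`. -/
theorem global_quasistate_criterionP (L1 L2 : Set (PF OU))
    (h1 : IsPLogic L1) (h2 : IsPLogic L2)
    (hS1 : ContainsS5 L1 none) (hS2 : ContainsS5 L2 none)
    (hH1 : AdmitsEHomogGlobal none L1) (hH2 : AdmitsEHomogGlobal none L2)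
    (φ ψ : PF OC) (Φ : Finset (PF OC)) (hΦ : Φ = φ.sub ∪ ψ.sub)
    (s : PF OC → ℕ) (hs : Function.Injective s)
    (hfresh : ∀ χ ∈ Φ, ∀ θ, s θ ∉ χ.atoms) :
    (¬ PGlobal (fusionE L1 L2) φ ψ ↔
      ∃ F : KFrame OC, FrameFor F (fusionE L1 L2) ∧
        ∃ V : ℕ → F.W → Prop, (∀ w, PVal (F := F) V φ w) ∧
          ∃ w, ¬ PVal (F := F) V ψ w) ∧
    (¬ PGlobal (fusionE L1 L2) φ ψ ↔
      ∃ Q : Finset (Finset (Finset (PF OC))),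
        (∀ q ∈ Q, IsQuasistateP none Φ q) ∧
        -- (C1)
        (¬ PGlobal L1 (PF.and (sur1P s φ) (sur1P s (QhatP none Q))) (sur1P s ψ)) ∧
        -- (C2)
        (∀ q ∈ Q, ¬ PGlobal L1 (PF.and (sur1P s φ) (sur1P s (QhatP none Q)))
          (PF.neg (sur1P s (qhatP none q)))) ∧
        -- (C3)
        (∀ q ∈ Q, ¬ PGlobal L2 (sur2P s (QhatP none Q))
          (PF.neg (sur2P s (qhatP none q))))) := by
  have hΦ' : SubformulaClosed Φ := hΦ ▸ (subformulaClosed_sub φ).union (subformulaClosed_sub ψ)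
  have h := global_quasistate_criterionP_general hS1 hS2 hH1 hH2 hΦ' (φ := φ) (ψ := ψ)
    (by simp [hΦ, PF.mem_sub_self]) (by simp [hΦ, PF.mem_sub_self]) hs hfresh
  exact ⟨h.out 0 1, h.out 0 2⟩

end PropML
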